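/- Let f(n) = b_d·n^d + ... + b_0 be a polynomial with integer coefficients such that b_d > 0, gcd(b_d, ..., b_0) = 1, and f(n) is a positive integer for every positive integer n. Then there exist constants c_1, c_2 > 0 depending only on f such that for every real x ≥ 1 and every real t > 0, #{n ≤ x : f(n)/φ(f(n)) > t} ≤ c_1 · exp(−exp(c_2·t)) · x, where n runs over positive integers. -/

import Mathlib

lemma aux_pow_dvd_fact (p m : ℕ) (hp : 0 < p) : p ^ m ∣ (m * p).factorial := by
  induction m with
  | zero => simp
  | succ m ih =>
    have h : (m+1) * p = (m * p + (p - 1)) + 1 := by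
      rw [add_mul]; omega
    rw [h, Nat.factorial_succ, ← h, pow_succ, mul_comm]
    refine mul_dvd_mul (Dvd.intro_left _ rfl) (ih.trans (Nat.factorial_dvd_factorial (by omega)))

lemma aux_sum_log_div (n : ℕ) :
    ∑ p ∈ n.primesLE, Real.log p / p ≤ 2 * Real.log n := by
  rcases Nat.eq_zero_or_pos n with h0 | hn
  · subst h0; simp
  have h1 : ∏ p ∈ n.primesLE, p ^ (n / p) ∣ n.factorial := by
    refine Finset.prod_dvd_of_isRelPrime ?_ ?_
    · intro p hp q hq hpq
      have := (Nat.coprime_primes (Nat.prime_of_mem_primesLE hp) (Nat.prime_of_mem_primesLE hq)).2 hpq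
      exact Nat.coprime_iff_isRelPrime.1 (Nat.Coprime.pow _ _ this)
    · intro p hp
      exact (aux_pow_dvd_fact p _ (Nat.prime_of_mem_primesLE hp).pos).trans (Nat.factorial_dvd_factorial (Nat.div_mul_le_self n p))
  have h2 : ∏ p ∈ n.primesLE, p ^ (n / p) ≤ n ^ n :=
    (Nat.le_of_dvd (Nat.factorial_pos n) h1).trans (Nat.factorial_le_pow n)
  have h3 : ∑ p ∈ n.primesLE, ((n / p : ℕ) : ℝ) * Real.log p ≤ n * Real.log n := by
    have : Real.log ((∏ p ∈ n.primesLE, p ^ (n / p) : ℕ) : ℝ) ≤ Real.log ((n ^ n : ℕ) : ℝ) := by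
      apply Real.log_le_log
      · exact_mod_cast Finset.prod_pos (fun p hp => pow_pos (Nat.prime_of_mem_primesLE hp).pos _)
      · exact_mod_cast h2
    push_cast at this
    rw [Real.log_prod, Real.log_pow] at this
    · simpa [Real.log_pow] using this
    · intro p hp
      have := (Nat.prime_of_mem_primesLE hp).pos
      positivity
  have hn' : (0:ℝ) < n := by exact_mod_cast hn
  have h4 : ∑ p ∈ n.primesLE, (n / 2 : ℝ) * (Real.log p / p) ≤
      ∑ p ∈ n.primesLE, ((n / p : ℕ) : ℝ) * Real.log p := by
    refine Finset.sum_le_sum fun p hp => ?_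
    have hpp := (Nat.prime_of_mem_primesLE hp).pos
    have hle := Nat.le_of_mem_primesLE hp
    have hp' : (0:ℝ) < p := by exact_mod_cast hpp
    have hl : 0 ≤ Real.log p := Real.log_natCast_nonneg p
    have : n ≤ 2 * ((n / p) * p) := by
      have h1 : 1 ≤ n / p := (Nat.one_le_div_iff hpp).2 hle
      have h2 := Nat.div_add_mod n p
      have h3 := Nat.mod_lt n hpp
      nlinarith
    have h5 : (n:ℝ) ≤ 2 * (((n / p : ℕ):ℝ) * p) := by exact_mod_cast this
    have h6 : (n:ℝ) / 2 / p ≤ ((n / p : ℕ):ℝ) := by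
      rw [div_le_iff₀ hp']; linarith
    calc (n / 2 : ℝ) * (Real.log p / p) = (n / 2 / p : ℝ) * Real.log p := by ring
      _ ≤ _ := by gcongr
  rw [← Finset.mul_sum] at h4
  have := h4.trans h3
  nlinarith

lemma aux_zeta_term (δ : ℝ) (hδ : 0 < δ) (m : ℕ) (hm : 0 < m) :
    ((m + 1 : ℕ) : ℝ) ^ (-(1 + δ)) ≤ δ⁻¹ * ((m : ℝ) ^ (-δ) - ((m + 1 : ℕ) : ℝ) ^ (-δ)) := by
  have hm' : (0:ℝ) < m := by exact_mod_cast hm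
  push_cast
  have h1 : Real.log (((m:ℝ) + 1) / m) ≥ 1 / (m + 1) := by
    have := Real.one_sub_inv_le_log_of_pos (x := ((m:ℝ) + 1) / m) (by positivity)
    refine le_trans (le_of_eq ?_) this
    field_simp; ring
  have h2 : 1 + δ / (m + 1) ≤ (((m:ℝ) + 1) / m) ^ δ := by
    rw [Real.rpow_def_of_pos (by positivity)]
    have := Real.add_one_le_exp (Real.log (((m:ℝ) + 1) / m) * δ)
    have h3 : δ / (m + 1) ≤ Real.log (((m:ℝ) + 1) / m) * δ := by
      calc δ / (m + 1) = (1 / (m + 1)) * δ := by ring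
        _ ≤ _ := by gcongr
    linarith
  have h3 : (m : ℝ) ^ (-δ) = (((m:ℝ) + 1) / m) ^ δ * ((m:ℝ) + 1) ^ (-δ) := by
    rw [Real.div_rpow (by positivity) (by positivity), Real.rpow_neg (by positivity),
      Real.rpow_neg (by positivity)]
    have : ((m:ℝ) + 1) ^ δ ≠ 0 := by positivity
    field_simp
  have h4 : ((m:ℝ) + 1) ^ (-(1 + δ)) = ((m:ℝ) + 1)⁻¹ * ((m:ℝ) + 1) ^ (-δ) := by
    rw [neg_add, Real.rpow_add (by positivity), Real.rpow_neg_one]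
  rw [h3, h4]
  have h5 : 0 < ((m:ℝ) + 1) ^ (-δ) := by positivity
  calc ((m:ℝ) + 1)⁻¹ * ((m:ℝ) + 1) ^ (-δ) = δ⁻¹ * ((1 + δ / (m + 1)) * ((m:ℝ) + 1) ^ (-δ) - ((m:ℝ) + 1) ^ (-δ)) := by
        field_simp; ring
    _ ≤ _ := by gcongr

lemma aux_zeta_sum (δ : ℝ) (hδ : 0 < δ) (N : ℕ) :
    ∑ m ∈ Finset.range N, (m : ℝ) ^ (-(1 + δ)) ≤ 1 + δ⁻¹ := by
  have key : ∀ N : ℕ, ∑ m ∈ Finset.range (N + 2), (m : ℝ) ^ (-(1 + δ)) ≤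
      1 + δ⁻¹ * (1 - ((N + 1 : ℕ) : ℝ) ^ (-δ)) := by
    intro N
    induction N with
    | zero =>
      rw [Finset.sum_range_succ, Finset.sum_range_succ]
      simp
      rw [Real.zero_rpow (by linarith)]
    | succ N ih =>
      rw [Finset.sum_range_succ]
      have := aux_zeta_term δ hδ (N + 1) (by omega)
      have h : N + 2 = N + 1 + 1 := rfl
      rw [h] at *
      nlinarith
  have h1 : ∑ m ∈ Finset.range N, (m : ℝ) ^ (-(1 + δ)) ≤ ∑ m ∈ Finset.range (N + 2), (m : ℝ) ^ (-(1 + δ)) :=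
    Finset.sum_le_sum_of_subset_of_nonneg (Finset.range_mono (by omega)) (fun _ _ _ => by positivity)
  have h2 : 0 ≤ δ⁻¹ * ((N + 1 : ℕ) : ℝ) ^ (-δ) := by positivity
  have := key N
  nlinarith

lemma aux_euler (δ : ℝ) (hδ : 0 < δ) (n : ℕ) :
    ∏ p ∈ n.primesLE, (1 - (p : ℝ) ^ (-(1 + δ)))⁻¹ ≤ 1 + δ⁻¹ := by
  let g : ℕ →* ℝ :=
    { toFun := fun m => (m : ℝ) ^ (-(1 + δ))
      map_one' := by simp
      map_mul' := fun a b => by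
        push_cast
        exact Real.mul_rpow (by positivity) (by positivity) }
  have hs : Summable g := by
    have := (Real.summable_nat_rpow (p := -(1+δ))).2 (by linarith)
    exact this
  have h := EulerProduct.prod_primesBelow_geometric_eq_tsum_smoothNumbers hs (n + 1)
  change ∏ p ∈ (n+1).primesBelow, (1 - g p)⁻¹ ≤ _
  rw [h]
  calc ∑' m : (n+1).smoothNumbers, g m ≤ ∑' m, g m :=
        Summable.tsum_subtype_le g _ (fun m => by exact Real.rpow_nonneg (Nat.cast_nonneg m) _) hs
    _ ≤ _ := Real.tsum_le_of_sum_range_le (fun m => by exact Real.rpow_nonneg (Nat.cast_nonneg m) _)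
        (fun N => aux_zeta_sum δ hδ N)

lemma aux_mertens (n : ℕ) (hn : 0 < n) :
    ∏ p ∈ n.primesLE, (1 - (p : ℝ)⁻¹)⁻¹ ≤ Real.exp 4 * (2 + Real.log n) := by
  set L := 1 + Real.log n with hL
  have hl : 0 ≤ Real.log n := Real.log_natCast_nonneg n
  have hL1 : 1 ≤ L := by linarith
  have hE := aux_euler L⁻¹ (by positivity) n
  rw [inv_inv] at hE
  have hcmp : ∏ p ∈ n.primesLE, (1 - (p : ℝ)⁻¹)⁻¹ ≤
      ∏ p ∈ n.primesLE, (Real.exp (2 * (Real.log p / p) / L) * (1 - (p : ℝ) ^ (-(1 + L⁻¹)))⁻¹) := by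
    refine Finset.prod_le_prod ?_ ?_
    · intro p hp
      have : (1:ℝ) < p := by exact_mod_cast (Nat.prime_of_mem_primesLE hp).one_lt
      have := inv_lt_one_of_one_lt₀ this
      exact inv_nonneg.2 (by linarith)
    · intro p hp
      have h2 : (2:ℝ) ≤ p := by exact_mod_cast (Nat.prime_of_mem_primesLE hp).two_le
      have hi : (p:ℝ)⁻¹ ≤ 1/2 := by
        rw [inv_le_comm₀ (by positivity) (by positivity)]; norm_num; exact_mod_cast h2
      have h4 : (p:ℝ) ^ (-(1 + L⁻¹)) = (p:ℝ)⁻¹ * Real.exp (-(Real.log p / L)) := by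
        rw [neg_add, Real.rpow_add (by positivity), Real.rpow_neg_one,
          Real.rpow_def_of_pos (by positivity)]
        congr 2
        field_simp
      have h5 := Real.add_one_le_exp (-(Real.log p / L))
      have hlp : 0 ≤ Real.log p / L := by
        have := Real.log_natCast_nonneg p
        positivity
      have h6 : Real.exp (-(Real.log p / L)) ≤ 1 := Real.exp_le_one_iff.2 (by linarith)
      rw [h4]
      set u := (p:ℝ)⁻¹ with hu
      have hu0 : 0 < u := by positivity
      set e := Real.exp (-(Real.log p / L)) with he
      have h7 : 2 * (Real.log p / p) / L = 2 * u * (Real.log p / L) := by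
        rw [hu]; field_simp
      have h8 := Real.add_one_le_exp (2 * (Real.log p / p) / L)
      have hue : u * e ≤ 1/2 := by nlinarith [Real.exp_pos (-(Real.log p / L))]
      rw [← div_eq_mul_inv, le_div_iff₀ (by linarith), inv_mul_le_iff₀ (by linarith)]
      refine le_trans ?_ (mul_le_mul_of_nonneg_left h8 (by linarith))
      rw [h7]
      set v := Real.log p / L
      have : u * (1 - e) ≤ u * v := by gcongr; linarith
      have : 0 ≤ u * v := by positivity
      nlinarith
  rw [Finset.prod_mul_distrib, ← Real.exp_sum] at hcmp
  have h9 : ∑ p ∈ n.primesLE, 2 * (Real.log p / p) / L ≤ 4 := by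
    rw [← Finset.sum_div, ← Finset.mul_sum, div_le_iff₀ (by positivity)]
    have := aux_sum_log_div n
    linarith
  calc _ ≤ _ := hcmp
    _ ≤ Real.exp 4 * (1 + L) := by
      refine mul_le_mul (Real.exp_le_exp.2 h9) hE ?_ (Real.exp_pos _).le
      refine Finset.prod_nonneg fun p hp => inv_nonneg.2 ?_
      have : (1:ℝ) < p := by exact_mod_cast (Nat.prime_of_mem_primesLE hp).one_lt
      have := Real.rpow_le_one_of_one_le_of_nonpos this.le (show (-(1 + L⁻¹)) ≤ 0 by
        have : 0 ≤ L⁻¹ := by positivity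
        linarith)
      linarith
    _ = _ := by rw [hL]; ring

lemma aux_crt (S : Finset ℕ) (hS : ∀ p ∈ S, p.Prime) (g : ℕ → ℕ → ℝ)
    (hg : ∀ p a, 0 ≤ g p a) (N : ℕ) :
    ∑ n ∈ Finset.Icc 1 N, ∏ p ∈ S, g p (n % p) ≤
      ((N / (∏ p ∈ S, p) + 1 : ℕ) : ℝ) * ∏ p ∈ S, ∑ a ∈ Finset.range p, g p a := by
  classical
  set P := ∏ p ∈ S, p with hP
  have hPpos : 0 < P := Finset.prod_pos fun p hp => (hS p hp).pos
  have hW : ∀ n, 0 ≤ ∏ p ∈ S, g p (n % p) := fun n => Finset.prod_nonneg fun p _ => hg _ _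
  have h1 : ∑ n ∈ Finset.range P, ∏ p ∈ S, g p (n % p) ≤
      ∏ p ∈ S, ∑ a ∈ Finset.range p, g p a := by
    rw [Finset.prod_sum]
    have hinj : Set.InjOn (fun n : ℕ => fun (p : ℕ) (_ : p ∈ S) => n % p) (Finset.range P : Set ℕ) := by
      intro m hm n hn h
      have hm : m < P := by simpa using hm
      have hn : n < P := by simpa using hn
      have h2 : ∀ p ∈ S, m ≡ n [MOD p] := fun p hp => congrFun (congrFun h p) hp
      have h3 : (P : ℤ) ∣ (n : ℤ) - m := by
        rw [hP]; push_cast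
        refine Finset.prod_dvd_of_coprime ?_ ?_
        · intro p hp q hq hpq
          exact Nat.isCoprime_iff_coprime.2 ((Nat.coprime_primes (hS p hp) (hS q hq)).2 hpq)
        · intro p hp
          exact (Nat.modEq_iff_dvd).1 (h2 p hp)
      exact Nat.ModEq.eq_of_lt_of_lt ((Nat.modEq_iff_dvd).2 h3) hm hn
    calc ∑ n ∈ Finset.range P, ∏ p ∈ S, g p (n % p)
        = ∑ q ∈ (Finset.range P).image (fun n : ℕ => fun (p : ℕ) (_ : p ∈ S) => n % p),
            ∏ x ∈ S.attach, g x.1 (q x.1 x.2) := by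
          rw [Finset.sum_image hinj]
          refine Finset.sum_congr rfl fun n _ => ?_
          exact (Finset.prod_attach S (fun p => g p (n % p))).symm
      _ ≤ _ := by
          refine Finset.sum_le_sum_of_subset_of_nonneg ?_ ?_
          · intro q hq
            obtain ⟨n, _, rfl⟩ := Finset.mem_image.1 hq
            simp only [Finset.mem_pi, Finset.mem_range]
            exact fun p hp => Nat.mod_lt _ (hS p hp).pos
          · exact fun q _ _ => Finset.prod_nonneg fun _ _ => hg _ _
  have h2 : ∀ q : ℕ, ∑ n ∈ Finset.range (q * P), ∏ p ∈ S, g p (n % p) =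
      q * ∑ n ∈ Finset.range P, ∏ p ∈ S, g p (n % p) := by
    intro q
    induction q with
    | zero => simp
    | succ q ih =>
      rw [add_mul, one_mul, Finset.sum_range_add, ih]
      have : ∀ n, ∏ p ∈ S, g p ((q * P + n) % p) = ∏ p ∈ S, g p (n % p) := by
        intro n
        refine Finset.prod_congr rfl fun p hp => ?_
        have hd : p ∣ q * P := Dvd.dvd.mul_left (Finset.dvd_prod_of_mem _ hp) q
        rw [Nat.add_mod, Nat.mod_eq_zero_of_dvd hd, zero_add, Nat.mod_mod]
      simp only [this]
      push_cast; ring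
  calc _ ≤ ∑ n ∈ Finset.range ((N / P + 1) * P), ∏ p ∈ S, g p (n % p) := by
        refine Finset.sum_le_sum_of_subset_of_nonneg ?_ (fun n _ _ => hW n)
        intro n hn
        have hn := (Finset.mem_Icc.1 hn).2
        have := Nat.lt_div_mul_add (a := N) hPpos
        rw [Finset.mem_range]
        rw [add_mul, one_mul]
        omega
    _ = _ := h2 _
    _ ≤ _ := by gcongr

lemma aux_roots (f : Polynomial ℤ) (hcont : f.content = 1) (p : ℕ) (hp : p.Prime) :
    ((Finset.range p).filter fun a : ℕ => (p : ℤ) ∣ f.eval (a : ℤ)).card ≤ f.natDegree := by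
  have : Fact p.Prime := ⟨hp⟩
  classical
  set F := f.map (Int.castRingHom (ZMod p)) with hF
  have hF0 : F ≠ 0 := by
    intro h
    have h1 : Polynomial.C (p : ℤ) ∣ f := by
      rw [Polynomial.C_dvd_iff_dvd_coeff]
      intro i
      have : F.coeff i = 0 := by rw [h]; simp
      rw [hF, Polynomial.coeff_map] at this
      exact (ZMod.intCast_zmod_eq_zero_iff_dvd _ p).1 (by simpa using this)
    have h2 := (Polynomial.dvd_content_iff_C_dvd).2 h1
    rw [hcont] at h2
    have h3 : p ∣ 1 := by exact_mod_cast h2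
    exact hp.one_lt.ne' (Nat.dvd_one.1 h3)
  calc _ ≤ F.roots.toFinset.card := by
        refine Finset.card_le_card_of_injOn (fun a : ℕ => (a : ZMod p)) ?_ ?_
        · intro a ha
          have ha := (Finset.mem_filter.1 ha).2
          have : (((f.eval (a : ℤ)) : ℤ) : ZMod p) = 0 := (ZMod.intCast_zmod_eq_zero_iff_dvd _ p).2 ha
          simp only [Finset.mem_coe, Multiset.mem_toFinset, Polynomial.mem_roots hF0, Polynomial.IsRoot.def]
          have h2 := Polynomial.eval_intCast_map (Int.castRingHom (ZMod p)) f (a : ℤ)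
          rw [← hF] at h2
          simpa [this] using h2
        · intro a ha b hb hab
          have ha := Finset.mem_range.1 (Finset.mem_filter.1 ha).1
          have hb := Finset.mem_range.1 (Finset.mem_filter.1 hb).1
          exact Nat.ModEq.eq_of_lt_of_lt ((ZMod.natCast_eq_natCast_iff a b p).1 hab) ha hb
    _ ≤ F.roots.card := Multiset.toFinset_card_le _
    _ ≤ F.natDegree := Polynomial.card_roots' F
    _ ≤ f.natDegree := Polynomial.natDegree_map_le

lemma aux_local (f : Polynomial ℤ) (hcont : f.content = 1) (p : ℕ) (hp : p.Prime) (w : ℝ)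
    (hw : 1 ≤ w) :
    (∑ a ∈ Finset.range p, if (p : ℤ) ∣ f.eval (a : ℤ) then w else 1) ≤ p * w ∧
    (∑ a ∈ Finset.range p, if (p : ℤ) ∣ f.eval (a : ℤ) then w else 1) ≤ p + f.natDegree * (w - 1) := by
  constructor
  · calc _ ≤ ∑ a ∈ Finset.range p, w := Finset.sum_le_sum fun a _ => by split_ifs <;> linarith
      _ = _ := by simp
  · have h : ∀ a : ℕ, (if (p : ℤ) ∣ f.eval (a : ℤ) then w else 1) =
        1 + if (p : ℤ) ∣ f.eval (a : ℤ) then (w - 1) else 0 := by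
      intro a; split_ifs <;> ring
    simp only [h]
    rw [Finset.sum_add_distrib, ← Finset.sum_filter, Finset.sum_const, Finset.sum_const]
    simp only [Finset.card_range, nsmul_eq_mul, mul_one]
    have := aux_roots f hcont p hp
    have h2 : (((Finset.range p).filter fun a : ℕ => (p : ℤ) ∣ f.eval (a : ℤ)).card : ℝ) ≤ f.natDegree := by
      exact_mod_cast this
    have : 0 ≤ w - 1 := by linarith
    gcongr

lemma aux_wp (p : ℕ) (hp : p.Prime) : 1 ≤ (1 - (p : ℝ)⁻¹)⁻¹ ∧
    (1 - (p : ℝ)⁻¹)⁻¹ ≤ Real.exp (1 / ((p:ℝ) - 1)) := by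
  have h2 : (2:ℝ) ≤ p := by exact_mod_cast hp.two_le
  have h : (1 - (p : ℝ)⁻¹)⁻¹ = 1 / ((p:ℝ) - 1) + 1 := by
    have : (p:ℝ) - 1 ≠ 0 := by linarith
    have h0 : (1 - (p : ℝ)⁻¹) = (p - 1) / p := by field_simp
    rw [h0]; field_simp; ring
  rw [h]
  have : 0 < 1 / ((p:ℝ) - 1) := one_div_pos.2 (by linarith)
  exact ⟨by linarith, Real.add_one_le_exp _⟩

lemma aux_local2 (f : Polynomial ℤ) (hcont : f.content = 1) (p : ℕ) (hp : p.Prime) (k : ℕ)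
    (hk : k < p) :
    (∑ a ∈ Finset.range p, if (p : ℤ) ∣ f.eval (a : ℤ) then ((1 - (p : ℝ)⁻¹)⁻¹) ^ k else 1) / p ≤
      Real.exp (4 * f.natDegree * k * ((p:ℝ) ^ 2)⁻¹) := by
  obtain ⟨hw1, hw2⟩ := aux_wp p hp
  have h2 : (2:ℝ) ≤ p := by exact_mod_cast hp.two_le
  have hkp : (k:ℝ) + 1 ≤ p := by exact_mod_cast hk
  have h1 := (aux_local f hcont p hp _ (one_le_pow₀ hw1 (n := k))).2
  set w := ((1 - (p : ℝ)⁻¹)⁻¹) ^ k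
  set u : ℝ := k / ((p:ℝ) - 1) with hu
  have hu0 : 0 ≤ u := div_nonneg (by positivity) (by linarith)
  have hu1 : u ≤ 1 := by rw [hu, div_le_one (by linarith)]; linarith
  have hwu : w ≤ Real.exp u := by
    calc w ≤ Real.exp (1 / ((p:ℝ) - 1)) ^ k := by
          exact pow_le_pow_left₀ (by linarith) hw2 k
      _ = _ := by rw [← Real.exp_nat_mul]; congr 1; rw [hu]; ring
  have hu2 : Real.exp u - 1 ≤ 2 * u := by
    have := Real.abs_exp_sub_one_le (x := u) (by rw [abs_of_nonneg hu0]; exact hu1)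
    rw [abs_of_nonneg hu0] at this
    exact (le_abs_self _).trans this
  have hu3 : u ≤ 2 * k / p := by
    rw [hu, div_le_div_iff₀ (by linarith) (by linarith)]
    have : (0:ℝ) ≤ k := by positivity
    nlinarith
  have hw3 : w - 1 ≤ 4 * k / p := by
    have : 4 * (k:ℝ) / p = 2 * (2 * k / p) := by ring
    linarith
  calc _ ≤ ((p:ℝ) + f.natDegree * (4 * k / p)) / p := by
        refine div_le_div_of_nonneg_right (h1.trans ?_) (by linarith)
        gcongr
    _ = 4 * f.natDegree * k * ((p:ℝ) ^ 2)⁻¹ + 1 := by field_simp; ring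
    _ ≤ _ := Real.add_one_le_exp _

lemma aux_large (m y c : ℕ) (hm : 0 < m) (hmc : m ≤ 2 ^ (c * (y + 1))) :
    (m : ℝ) / (Nat.totient m : ℝ) ≤ Real.exp (2 * c) *
      ∏ p ∈ y.primesLE, if p ∣ m then (1 - (p : ℝ)⁻¹)⁻¹ else 1 := by
  have h1 : (m : ℝ) / (Nat.totient m : ℝ) = ∏ p ∈ m.primeFactors, (1 - (p : ℝ)⁻¹)⁻¹ := by
    have := Nat.totient_eq_mul_prod_factors m
    have h2 : (Nat.totient m : ℝ) = m * ∏ p ∈ m.primeFactors, (1 - (p : ℝ)⁻¹) := by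
      have h5 := congrArg (fun q : ℚ => (q : ℝ)) this
      push_cast at h5
      exact h5
    rw [h2, Finset.prod_inv_distrib]
    have : (m:ℝ) ≠ 0 := by positivity
    rw [← div_div, div_self this, one_div]
  rw [h1, ← Finset.prod_filter_mul_prod_filter_not m.primeFactors (fun p => p ≤ y), mul_comm]
  have h3 : m.primeFactors.filter (fun p => p ≤ y) = y.primesLE.filter (fun p => p ∣ m) := by
    ext p
    simp only [Finset.mem_filter, Nat.mem_primeFactors, Nat.mem_primesLE]
    constructor
    · rintro ⟨⟨a, b, _⟩, d⟩; exact ⟨⟨d, a⟩, b⟩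
    · rintro ⟨⟨d, a⟩, b⟩; exact ⟨⟨a, b, hm.ne'⟩, d⟩
  rw [h3, ← Finset.prod_filter]
  set T := m.primeFactors.filter (fun p => ¬ p ≤ y) with hT
  have hTp : ∀ p ∈ T, p.Prime ∧ y < p := by
    intro p hp
    obtain ⟨a, b⟩ := Finset.mem_filter.1 hp
    exact ⟨Nat.prime_of_mem_primeFactors a, by omega⟩
  have hcard : T.card ≤ c * (y + 1) := by
    have h4 : 2 ^ T.card ≤ 2 ^ (c * (y + 1)) := by
      calc 2 ^ T.card ≤ ∏ p ∈ T, p := Finset.pow_card_le_prod _ _ _ fun p hp => (hTp p hp).1.two_le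
        _ ≤ ∏ p ∈ m.primeFactors, p := Finset.prod_le_prod_of_subset_of_one_le' (Finset.filter_subset _ _)
            fun p hp _ => (Nat.prime_of_mem_primeFactors hp).one_le
        _ ≤ m := Nat.le_of_dvd hm (Nat.prod_primeFactors_dvd m)
        _ ≤ _ := hmc
    exact (Nat.pow_le_pow_iff_right (by norm_num)).1 h4
  refine mul_le_mul_of_nonneg_right ?_ ?_
  · calc ∏ p ∈ T, (1 - (p : ℝ)⁻¹)⁻¹ ≤ ∏ p ∈ T, Real.exp (2 / ((y:ℝ) + 1)) := by
          refine Finset.prod_le_prod (fun p hp => ?_) (fun p hp => ?_)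
          · linarith [(aux_wp p (hTp p hp).1).1]
          · refine (aux_wp p (hTp p hp).1).2.trans (Real.exp_le_exp.2 ?_)
            have h2 : (2:ℝ) ≤ p := by exact_mod_cast (hTp p hp).1.two_le
            have h3 : (y:ℝ) + 1 ≤ p := by exact_mod_cast (hTp p hp).2
            rw [div_le_div_iff₀ (by linarith) (by positivity)]
            linarith
      _ = Real.exp (T.card * (2 / ((y:ℝ) + 1))) := by
          rw [Finset.prod_const, Real.exp_nat_mul]
      _ ≤ _ := by
          rw [Real.exp_le_exp]
          have : (T.card : ℝ) ≤ c * (y + 1) := by exact_mod_cast hcard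
          calc _ ≤ (c * (y + 1) : ℝ) * (2 / ((y:ℝ) + 1)) := by gcongr
            _ = _ := by field_simp
  · refine Finset.prod_nonneg fun p hp => ?_
    have := (aux_wp p (Nat.prime_of_mem_primesLE (Finset.mem_filter.1 hp).1)).1
    linarith

lemma aux_polybound (f : Polynomial ℤ) : ∃ b : ℕ, ∀ n : ℕ, 0 < n →
    (f.eval (n:ℤ)).toNat ≤ 2 ^ b * n ^ f.natDegree := by
  refine ⟨∑ i ∈ Finset.range (f.natDegree + 1), (f.coeff i).natAbs, fun n hn => ?_⟩
  set B := ∑ i ∈ Finset.range (f.natDegree + 1), (f.coeff i).natAbs with hB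
  have h1 : f.eval (n:ℤ) ≤ (B * n ^ f.natDegree : ℕ) := by
    rw [Polynomial.eval_eq_sum_range, hB, Finset.sum_mul]
    push_cast
    refine Finset.sum_le_sum fun i hi => ?_
    have hi : i ≤ f.natDegree := by have := Finset.mem_range.1 hi; omega
    have h2 : (n:ℤ) ^ i ≤ (n:ℤ) ^ f.natDegree := pow_le_pow_right₀ (by exact_mod_cast hn) hi
    calc f.coeff i * (n:ℤ) ^ i ≤ |f.coeff i| * (n:ℤ) ^ i := by
          gcongr; exact le_abs_self _
      _ ≤ _ := by gcongr
  have h2 : B ≤ 2 ^ B := Nat.lt_two_pow_self.le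
  calc (f.eval (n:ℤ)).toNat ≤ B * n ^ f.natDegree := Int.toNat_le.2 h1
    _ ≤ _ := by gcongr

lemma aux_avg (f : Polynomial ℤ) (hcont : f.content = 1) (k y : ℕ) (hk : 0 < k) :
    ∏ p ∈ y.primesLE, ((∑ a ∈ Finset.range p,
      if (p : ℤ) ∣ f.eval (a : ℤ) then ((1 - (p : ℝ)⁻¹)⁻¹) ^ k else 1) / p) ≤
      Real.exp (8 * f.natDegree) * (Real.exp 4 * (2 + Real.log k)) ^ k := by
  set G : ℕ → ℝ := fun p => (∑ a ∈ Finset.range p,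
      if (p : ℤ) ∣ f.eval (a : ℤ) then ((1 - (p : ℝ)⁻¹)⁻¹) ^ k else 1) / p with hG
  have hG0 : ∀ p ∈ y.primesLE, 0 ≤ G p := by
    intro p hp
    have := (aux_wp p (Nat.prime_of_mem_primesLE hp)).1
    refine div_nonneg (Finset.sum_nonneg fun a _ => ?_) (by positivity)
    split_ifs
    · exact pow_nonneg (by linarith) _
    · norm_num
  rw [← Finset.prod_filter_mul_prod_filter_not y.primesLE (fun p => p ≤ k), mul_comm]
  refine mul_le_mul ?_ ?_ (Finset.prod_nonneg fun p hp => hG0 p (Finset.mem_filter.1 hp).1)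
    (Real.exp_pos _).le
  · calc ∏ p ∈ y.primesLE.filter (fun p => ¬ p ≤ k), G p
        ≤ ∏ p ∈ y.primesLE.filter (fun p => ¬ p ≤ k),
            Real.exp (4 * f.natDegree * k * ((p:ℝ) ^ 2)⁻¹) := by
          refine Finset.prod_le_prod (fun p hp => hG0 p (Finset.mem_filter.1 hp).1) fun p hp => ?_
          obtain ⟨h1, h2⟩ := Finset.mem_filter.1 hp
          exact aux_local2 f hcont p (Nat.prime_of_mem_primesLE h1) k (by omega)
      _ = Real.exp (4 * f.natDegree * k * ∑ p ∈ y.primesLE.filter (fun p => ¬ p ≤ k), ((p:ℝ) ^ 2)⁻¹) := by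
          rw [← Real.exp_sum, Finset.mul_sum]
      _ ≤ _ := by
          rw [Real.exp_le_exp]
          have h1 : ∑ p ∈ y.primesLE.filter (fun p => ¬ p ≤ k), ((p:ℝ) ^ 2)⁻¹ ≤ 2 / ((k:ℝ) + 1) := by
            refine le_trans ?_ (sum_Ioo_inv_sq_le k (y + 1))
            refine Finset.sum_le_sum_of_subset_of_nonneg ?_ (fun _ _ _ => by positivity)
            intro p hp
            obtain ⟨h1, h2⟩ := Finset.mem_filter.1 hp
            have := Nat.le_of_mem_primesLE h1
            rw [Finset.mem_Ioo]; omega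
          have h2 : (k:ℝ) * (2 / ((k:ℝ) + 1)) ≤ 2 := by
            rw [← mul_div_assoc, div_le_iff₀ (by positivity)]; linarith
          calc _ ≤ 4 * (f.natDegree:ℝ) * k * (2 / ((k:ℝ) + 1)) := by gcongr
            _ = 4 * (f.natDegree:ℝ) * (k * (2 / ((k:ℝ) + 1))) := by ring
            _ ≤ 4 * (f.natDegree:ℝ) * 2 := by gcongr
            _ = _ := by ring
  · calc ∏ p ∈ y.primesLE.filter (fun p => p ≤ k), G p
        ≤ ∏ p ∈ y.primesLE.filter (fun p => p ≤ k), ((1 - (p : ℝ)⁻¹)⁻¹) ^ k := by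
          refine Finset.prod_le_prod (fun p hp => hG0 p (Finset.mem_filter.1 hp).1) fun p hp => ?_
          have hpp := Nat.prime_of_mem_primesLE (Finset.mem_filter.1 hp).1
          have h1 := (aux_local f hcont p hpp _ (one_le_pow₀ (aux_wp p hpp).1 (n := k))).1
          have : (0:ℝ) < p := by exact_mod_cast hpp.pos
          rw [hG]
          simp only
          rw [div_le_iff₀ this, mul_comm]
          exact h1
      _ = (∏ p ∈ y.primesLE.filter (fun p => p ≤ k), (1 - (p : ℝ)⁻¹)⁻¹) ^ k := by
          rw [Finset.prod_pow]
      _ ≤ (∏ p ∈ k.primesLE, (1 - (p : ℝ)⁻¹)⁻¹) ^ k := by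
          refine pow_le_pow_left₀ (Finset.prod_nonneg fun p hp => ?_) ?_ k
          · linarith [(aux_wp p (Nat.prime_of_mem_primesLE (Finset.mem_filter.1 hp).1)).1]
          · refine Finset.prod_le_prod_of_subset_of_one_le ?_ ?_ ?_
            · intro p hp
              obtain ⟨h1, h2⟩ := Finset.mem_filter.1 hp
              exact Nat.mem_primesLE.2 ⟨h2, Nat.prime_of_mem_primesLE h1⟩
            · intro p hp
              linarith [(aux_wp p (Nat.prime_of_mem_primesLE (Finset.mem_filter.1 hp).1)).1]
            · intro p hp _
              exact (aux_wp p (Nat.prime_of_mem_primesLE hp)).1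
      _ ≤ _ := by
          refine pow_le_pow_left₀ (Finset.prod_nonneg fun p hp => ?_) (aux_mertens k hk) k
          linarith [(aux_wp p (Nat.prime_of_mem_primesLE hp)).1]

lemma aux_moment (f : Polynomial ℤ) (hcont : f.content = 1)
    (hpos : ∀ n : ℕ, 0 < n → 0 < f.eval (n : ℤ)) :
    ∃ A : ℝ, 0 < A ∧ ∀ (N k : ℕ), 0 < N → 0 < k → ∀ t : ℝ, 0 < t →
      (((Finset.Icc 1 N).filter fun n : ℕ =>
          t < ((f.eval (n : ℤ)).toNat : ℝ) / (Nat.totient (f.eval (n : ℤ)).toNat : ℝ)).card : ℝ) ≤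
        2 * Real.exp (8 * f.natDegree) * N * (A * (2 + Real.log k) / t) ^ k := by
  obtain ⟨b, hb⟩ := aux_polybound f
  set c := b + 2 * f.natDegree with hc
  refine ⟨Real.exp (2 * c) * Real.exp 4, by positivity, ?_⟩
  intro N k hN hk t ht
  set y := Nat.log 4 N with hy
  set R : ℕ → ℝ := fun n => ((f.eval (n : ℤ)).toNat : ℝ) / (Nat.totient (f.eval (n : ℤ)).toNat : ℝ)
    with hR
  set g : ℕ → ℕ → ℝ := fun p a => if (p : ℤ) ∣ f.eval (a : ℤ) then (|1 - (p : ℝ)⁻¹|⁻¹) ^ k else 1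
    with hg
  have habs : ∀ p : ℕ, p.Prime → |1 - (p:ℝ)⁻¹| = 1 - (p:ℝ)⁻¹ := by
    intro p hp
    apply abs_of_nonneg
    have : (1:ℝ) < p := by exact_mod_cast hp.one_lt
    have := inv_lt_one_of_one_lt₀ this
    linarith
  have hR0 : ∀ n, 0 ≤ R n := fun n => by positivity
  have hRW : ∀ n ∈ Finset.Icc 1 N, (R n) ^ k ≤
      Real.exp (2 * c) ^ k * ∏ p ∈ y.primesLE, g p (n % p) := by
    intro n hn
    obtain ⟨hn1, hnN⟩ := Finset.mem_Icc.1 hn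
    have hm : 0 < (f.eval (n:ℤ)).toNat := by have := hpos n hn1; omega
    have hmc : (f.eval (n:ℤ)).toNat ≤ 2 ^ (c * (y + 1)) := by
      have h1 : n < 4 ^ (y + 1) := hnN.trans_lt (Nat.lt_pow_succ_log_self (by norm_num) N)
      calc _ ≤ 2 ^ b * n ^ f.natDegree := hb n hn1
        _ ≤ 2 ^ (b * (y + 1)) * (4 ^ (y + 1)) ^ f.natDegree := by
          gcongr
          · norm_num
          · nlinarith
        _ = _ := by
          rw [show (4:ℕ) = 2 ^ 2 by norm_num, ← pow_mul, ← pow_mul, ← pow_add, hc]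
          congr 1; ring
    have h2 := aux_large _ y c hm hmc
    have h3 := pow_le_pow_left₀ (hR0 n) h2 k
    rw [mul_pow, ← Finset.prod_pow] at h3
    refine h3.trans (le_of_eq ?_)
    congr 1
    refine Finset.prod_congr rfl fun p hp => ?_
    have hpp := Nat.prime_of_mem_primesLE hp
    have hdvd : (p ∣ (f.eval (n:ℤ)).toNat) ↔ (p:ℤ) ∣ f.eval ((n % p : ℕ) : ℤ) := by
      rw [← Int.natCast_dvd_natCast, Int.toNat_of_nonneg (hpos n hn1).le]
      have h4 : (p:ℤ) ∣ (n:ℤ) - ((n % p : ℕ) : ℤ) := by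
        have : (n : ℤ) - ((n % p : ℕ) : ℤ) = p * ((n / p : ℕ) : ℤ) := by
          have := Nat.div_add_mod n p
          have : ((p * (n / p) + n % p : ℕ) : ℤ) = n := by rw [this]
          push_cast at this ⊢
          linarith
        rw [this]; exact Dvd.intro _ rfl
      have h5 := h4.trans (Polynomial.sub_dvd_eval_sub (n:ℤ) ((n % p : ℕ) : ℤ) f)
      exact (dvd_iff_dvd_of_dvd_sub h5)
    simp only [hg, habs p hpp, hdvd]
    split_ifs <;> simp
  have hprod : ∏ p ∈ y.primesLE, p = primorial y := (primorial_eq_prod_primesLE y).symm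
  have hPN : primorial y ≤ N :=
    (primorial_le_four_pow y).trans (Nat.pow_log_le_self 4 hN.ne')
  have hPpos := primorial_pos y
  have hcrt := aux_crt y.primesLE (fun p hp => Nat.prime_of_mem_primesLE hp) g
    (fun p a => by simp only [hg]; split_ifs <;> positivity) N
  rw [hprod] at hcrt
  have havg := aux_avg f hcont k y hk
  have havg' : ∏ p ∈ y.primesLE, ∑ a ∈ Finset.range p, g p a ≤
      (primorial y : ℝ) * (Real.exp (8 * f.natDegree) * (Real.exp 4 * (2 + Real.log k)) ^ k) := by
    rw [Finset.prod_div_distrib, div_le_iff₀ (by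
      refine Finset.prod_pos fun p hp => ?_
      exact_mod_cast (Nat.prime_of_mem_primesLE hp).pos)] at havg
    rw [mul_comm, ← hprod]
    push_cast
    refine le_trans (le_of_eq ?_) havg
    refine Finset.prod_congr rfl fun p hp => ?_
    simp only [hg, habs p (Nat.prime_of_mem_primesLE hp)]
  have hq : ((N / primorial y + 1 : ℕ) : ℝ) * primorial y ≤ 2 * N := by
    have : (N / primorial y + 1) * primorial y ≤ 2 * N := by
      have := Nat.div_mul_le_self N (primorial y)
      rw [add_mul]; omega
    exact_mod_cast this
  set M := Real.exp (8 * f.natDegree) * (Real.exp 4 * (2 + Real.log k)) ^ k with hM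
  have hM0 : 0 ≤ M := by
    have := Real.log_natCast_nonneg k
    positivity
  have hsum : ∑ n ∈ Finset.Icc 1 N, ∏ p ∈ y.primesLE, g p (n % p) ≤ 2 * N * M := by
    calc _ ≤ _ := hcrt
      _ ≤ ((N / primorial y + 1 : ℕ) : ℝ) * (primorial y * M) := by gcongr
      _ = (((N / primorial y + 1 : ℕ) : ℝ) * primorial y) * M := by ring
      _ ≤ _ := by gcongr
  have hmarkov : (((Finset.Icc 1 N).filter fun n : ℕ => t < R n).card : ℝ) * t ^ k ≤
      Real.exp (2 * c) ^ k * (2 * N * M) := by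
    calc _ = ∑ n ∈ (Finset.Icc 1 N).filter fun n : ℕ => t < R n, t ^ k := by
          rw [Finset.sum_const, nsmul_eq_mul]
      _ ≤ ∑ n ∈ (Finset.Icc 1 N).filter fun n : ℕ => t < R n, R n ^ k := by
          refine Finset.sum_le_sum fun n hn => ?_
          exact pow_le_pow_left₀ ht.le (Finset.mem_filter.1 hn).2.le k
      _ ≤ ∑ n ∈ Finset.Icc 1 N, R n ^ k :=
          Finset.sum_le_sum_of_subset_of_nonneg (Finset.filter_subset _ _)
            (fun n _ _ => pow_nonneg (hR0 n) k)
      _ ≤ ∑ n ∈ Finset.Icc 1 N, Real.exp (2 * c) ^ k * ∏ p ∈ y.primesLE, g p (n % p) :=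
          Finset.sum_le_sum hRW
      _ = Real.exp (2 * c) ^ k * ∑ n ∈ Finset.Icc 1 N, ∏ p ∈ y.primesLE, g p (n % p) := by
          rw [Finset.mul_sum]
      _ ≤ _ := by gcongr
  rw [← le_div_iff₀ (by positivity)] at hmarkov
  refine hmarkov.trans (le_of_eq ?_)
  rw [hM, div_pow, mul_pow, mul_pow, mul_pow]
  ring

/-- Theorem (Radomskii, Theorem 3, inequality (2)): for a primitive polynomial `f` with
positive leading coefficient mapping positive integers to positive integers,
`#{n ≤ x : f(n)/φ(f(n)) > t} ≤ c₁ exp(-exp(c₂ t)) x`. -/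
theorem card_totient_ratio_polynomial_gt_le (f : Polynomial ℤ)
    (hlead : 0 < f.leadingCoeff) (hcont : f.content = 1)
    (hpos : ∀ n : ℕ, 0 < n → 0 < f.eval (n : ℤ)) :
    ∃ c₁ c₂ : ℝ, 0 < c₁ ∧ 0 < c₂ ∧ ∀ x : ℝ, 1 ≤ x → ∀ t : ℝ, 0 < t →
      (((Finset.Icc 1 ⌊x⌋₊).filter fun n : ℕ =>
          t < ((f.eval (n : ℤ)).toNat : ℝ) / (Nat.totient (f.eval (n : ℤ)).toNat : ℝ)).card : ℝ) ≤
        c₁ * Real.exp (-Real.exp (c₂ * t)) * x := by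
  obtain ⟨A, hA, hmom⟩ := aux_moment f hcont hpos
  set E := Real.exp 1 with hE
  have hE0 : 0 < E := Real.exp_pos 1
  set c₂ := 1 / (2 * E * A) with hc2
  have hc20 : 0 < c₂ := by positivity
  set D := 2 * Real.exp (8 * f.natDegree) with hD
  have hD0 : 0 < D := by positivity
  refine ⟨D + Real.exp (Real.exp 3), c₂, by positivity, hc20, ?_⟩
  intro x hx t ht
  have hN : 0 < ⌊x⌋₊ := Nat.floor_pos.2 hx
  have hNx : (⌊x⌋₊ : ℝ) ≤ x := Nat.floor_le (by linarith)
  set K := Real.exp (c₂ * t) with hK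
  by_cases hT : t < 6 * E * A
  · have h1 : c₂ * t ≤ 3 := by
      rw [hc2, div_mul_eq_mul_div, div_le_iff₀ (by positivity)]; linarith
    have h2 : K ≤ Real.exp 3 := Real.exp_le_exp.2 h1
    have h3 : 1 ≤ (D + Real.exp (Real.exp 3)) * Real.exp (-K) := by
      calc (1:ℝ) = Real.exp 0 := by simp
        _ ≤ Real.exp (Real.exp 3 + -K) := Real.exp_le_exp.2 (by linarith)
        _ = Real.exp (Real.exp 3) * Real.exp (-K) := Real.exp_add _ _
        _ ≤ _ := by gcongr; linarith
    calc _ ≤ ((Finset.Icc 1 ⌊x⌋₊).card : ℝ) := by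
          exact_mod_cast Finset.card_filter_le _ _
      _ = (⌊x⌋₊ : ℝ) := by simp
      _ ≤ 1 * x := by linarith
      _ ≤ _ := by gcongr
  · push Not at hT
    have hK1 : 1 ≤ K := Real.one_le_exp (by positivity)
    set k := ⌈K⌉₊ with hk
    have hkK : K ≤ k := Nat.le_ceil K
    have hk0 : 0 < k := Nat.ceil_pos.2 (by linarith)
    have hk2 : (k:ℝ) ≤ 2 * K := by
      have := Nat.ceil_lt_add_one (show 0 ≤ K by linarith)
      linarith
    have hlog : Real.log k ≤ 1 + c₂ * t := by
      calc Real.log k ≤ Real.log (2 * K) := Real.log_le_log (by exact_mod_cast hk0) hk2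
        _ = Real.log 2 + c₂ * t := by
          rw [Real.log_mul (by norm_num) (by positivity), hK, Real.log_exp]
        _ ≤ _ := by linarith [Real.log_two_lt_d9]
    have hbase : A * (2 + Real.log k) / t ≤ Real.exp (-1) := by
      rw [Real.exp_neg, ← hE, div_le_iff₀ ht, inv_mul_eq_div, le_div_iff₀ hE0]
      have h1 : A * E * c₂ = 1 / 2 := by rw [hc2]; field_simp
      calc A * (2 + Real.log k) * E ≤ A * (2 + (1 + c₂ * t)) * E := by gcongr
        _ = 3 * E * A + (A * E * c₂) * t := by ring
        _ ≤ t := by rw [h1]; linarith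
    have hbase0 : 0 ≤ A * (2 + Real.log k) / t := by
      have := Real.log_natCast_nonneg k
      positivity
    have hpow : (A * (2 + Real.log k) / t) ^ k ≤ Real.exp (-K) := by
      calc _ ≤ Real.exp (-1) ^ k := pow_le_pow_left₀ hbase0 hbase k
        _ = Real.exp (-k) := by rw [← Real.exp_nat_mul]; congr 1; ring
        _ ≤ _ := Real.exp_le_exp.2 (by linarith)
    calc _ ≤ D * ⌊x⌋₊ * (A * (2 + Real.log k) / t) ^ k := hmom _ k hN hk0 t ht
      _ ≤ D * x * Real.exp (-K) := by gcongr
      _ = D * Real.exp (-K) * x := by ring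
      _ ≤ _ := by
        gcongr
        linarith [Real.exp_pos (Real.exp 3)]
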